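/- arXiv:0812.2126 — 2 statements merged into one kernel-verified Lean document; each statement's English description precedes it below -/
import Mathlib

section
/- Let ⟨ω₁, …, ω_{n+2}⟩ be an (n+2)-web of hypersurfaces on U normalized so that ω_{n+1} = −(ω₁ + … + ω_n) and ω_{n+2} = −Σᵢ aᵢ ωᵢ with aᵢ smooth, nonvanishing and aᵢ(x) ≠ aⱼ(x) for i ≠ j, and let Γ be a torsion-free affine connection for which this web is geodesic. Let b₁, …, b_n be smooth nonvanishing functions with bᵢ(x) ≠ bⱼ(x) for i ≠ j such that the 1-form ω = b₁ω₁ + … + b_nω_n is nonvanishing and satisfies ω ∧ dω = 0. Then the foliation defined by ω is totally geodesic for Γ if and only if s^a_{ij} = s^b_{ij} for all i ≠ j. -/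
open scoped BigOperators

/-- Partial derivative in the `i`-th coordinate direction. -/
noncomputable def pd {n : ℕ} (i : Fin n) (f : (Fin n → ℝ) → ℝ) (x : Fin n → ℝ) : ℝ :=
  fderiv ℝ f x (Pi.single i 1)

/-- A torsion-free affine connection on `U`, given by its Christoffel symbols `Γ k i j`
(smooth on `U` and symmetric in the lower indices `i j`). -/
def IsTorsionFreeConn {n : ℕ} (U : Set (Fin n → ℝ))
    (Γ : Fin n → Fin n → Fin n → (Fin n → ℝ) → ℝ) : Prop :=
  (∀ k i j, ContDiffOn ℝ (⊤ : ℕ∞) (Γ k i j) U) ∧ (∀ k i j x, Γ k i j x = Γ k j i x)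

/-- `γ` is a geodesic of `Γ` on the set `I ⊆ ℝ`, with image in `U`. -/
def IsGeodesicOn {n : ℕ} (U : Set (Fin n → ℝ))
    (Γ : Fin n → Fin n → Fin n → (Fin n → ℝ) → ℝ)
    (I : Set ℝ) (γ : ℝ → Fin n → ℝ) : Prop :=
  (∀ t ∈ I, γ t ∈ U) ∧ ContDiffOn ℝ 2 γ I ∧
    ∀ t ∈ I, ∀ k, deriv (fun s => deriv (fun u => γ u k) s) t +
      ∑ i, ∑ j, Γ k i j (γ t) * deriv (fun u => γ u i) t * deriv (fun u => γ u j) t = 0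

/-- The codimension-one foliation defined by the `1`-form `ω` is totally geodesic for `Γ`:
every geodesic tangent to a leaf at time `0` stays tangent to the kernel of `ω`. -/
def TotallyGeodesic {n : ℕ} (U : Set (Fin n → ℝ))
    (Γ : Fin n → Fin n → Fin n → (Fin n → ℝ) → ℝ)
    (ω : (Fin n → ℝ) → Fin n → ℝ) : Prop :=
  ∀ I : Set ℝ, IsOpen I → I.OrdConnected → (0 : ℝ) ∈ I →
    ∀ γ : ℝ → Fin n → ℝ, IsGeodesicOn U Γ I γ →
      (∑ k, ω (γ 0) k * deriv (fun u => γ u k) 0) = 0 →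
      ∀ t ∈ I, (∑ k, ω (γ t) k * deriv (fun u => γ u k) t) = 0

/-- `ω` is a smooth nonvanishing `1`-form on `U` satisfying the integrability
condition `ω ∧ dω = 0`. -/
def IsFoliationForm {n : ℕ} (U : Set (Fin n → ℝ)) (ω : (Fin n → ℝ) → Fin n → ℝ) : Prop :=
  ContDiffOn ℝ (⊤ : ℕ∞) ω U ∧ (∀ x ∈ U, ω x ≠ 0) ∧
    ∀ x ∈ U, ∀ i j k,
      ω x i * (pd j (fun y => ω y k) x - pd k (fun y => ω y j) x) +
      ω x j * (pd k (fun y => ω y i) x - pd i (fun y => ω y k) x) +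
      ω x k * (pd i (fun y => ω y j) x - pd j (fun y => ω y i) x) = 0

/-- Components of the symmetric covariant differential `d^s_Γ ω`. -/
noncomputable def dsym {n : ℕ} (Γ : Fin n → Fin n → Fin n → (Fin n → ℝ) → ℝ)
    (ω : (Fin n → ℝ) → Fin n → ℝ) (i j : Fin n) (x : Fin n → ℝ) : ℝ :=
  (pd i (fun y => ω y j) x + pd j (fun y => ω y i) x) / 2 - ∑ k, Γ k i j x * ω x k

/-- Components of the symmetric product `θ·ω` of two `1`-forms. -/
noncomputable def symProd {n : ℕ} (θ ω : (Fin n → ℝ) → Fin n → ℝ) (i j : Fin n) (x : Fin n → ℝ) : ℝ :=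
  (θ x i * ω x j + θ x j * ω x i) / 2

/-- A `d`-web of hypersurfaces on `U`: a family of smooth nonvanishing integrable `1`-forms,
any `n` of which are linearly independent at every point of `U`. -/
def IsWeb {n d : ℕ} (U : Set (Fin n → ℝ)) (ωs : Fin d → (Fin n → ℝ) → Fin n → ℝ) : Prop :=
  (∀ i, IsFoliationForm U (ωs i)) ∧
    ∀ x ∈ U, ∀ σ : Fin n → Fin d, Function.Injective σ →
      LinearIndependent ℝ (fun i => ωs (σ i) x)

/-- `Γ` and `Γ'` are projectively equivalent on `U`:
`Γ'ᵏᵢⱼ = Γᵏᵢⱼ + δᵏᵢ ρⱼ + δᵏⱼ ρᵢ` for some smooth `1`-form `ρ`. -/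
def ProjEquiv {n : ℕ} (U : Set (Fin n → ℝ))
    (Γ Γ' : Fin n → Fin n → Fin n → (Fin n → ℝ) → ℝ) : Prop :=
  ∃ ρ : (Fin n → ℝ) → Fin n → ℝ, ContDiffOn ℝ (⊤ : ℕ∞) ρ U ∧
    ∀ x ∈ U, ∀ k i j, Γ' k i j x =
      Γ k i j x + (if k = i then ρ x j else 0) + (if k = j then ρ x i else 0)

/-- `X` is the frame of vector fields dual to the coframe `ωs` on `U`. -/
def IsDualFrame {n : ℕ} (U : Set (Fin n → ℝ)) (ωs : Fin n → (Fin n → ℝ) → Fin n → ℝ)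
    (X : Fin n → (Fin n → ℝ) → Fin n → ℝ) : Prop :=
  (∀ i, ContDiffOn ℝ (⊤ : ℕ∞) (X i) U) ∧
    ∀ x ∈ U, ∀ i j, (∑ k, ωs i x k * X j x k) = if i = j then 1 else 0

/-- The web invariants `s^a_{ij} = (1/(aᵢ−aⱼ))·(aᵢ ∂ⱼ − aⱼ ∂ᵢ) log (aⱼ/aᵢ)`, where `∂ᵢ`
is derivation along the frame vector field `X i`. -/
noncomputable def sInv {n : ℕ} (X : Fin n → (Fin n → ℝ) → Fin n → ℝ)
    (a : Fin n → (Fin n → ℝ) → ℝ) (i j : Fin n) (x : Fin n → ℝ) : ℝ :=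
  (1 / (a i x - a j x)) *
    (a i x * (fderiv ℝ (a j) x (X j x) / a j x - fderiv ℝ (a i) x (X j x) / a i x) -
     a j x * (fderiv ℝ (a j) x (X i x) / a j x - fderiv ℝ (a i) x (X i x) / a i x))

/-- The curvature tensor `Rᵏₗᵢⱼ` of the connection `Γ`. -/
noncomputable def curv {n : ℕ} (Γ : Fin n → Fin n → Fin n → (Fin n → ℝ) → ℝ)
    (k l i j : Fin n) (x : Fin n → ℝ) : ℝ :=
  pd i (Γ k j l) x - pd j (Γ k i l) x +
    ∑ m, (Γ k i m x * Γ m j l x - Γ k j m x * Γ m i l x)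

open Set

/-- A solution of a scalar linear homogeneous equation that vanishes at `0` vanishes. -/
lemma eq_zero_of_hasDerivAt_mul {I : Set ℝ} (hI : IsOpen I) (hconn : I.OrdConnected)
    (h0 : (0 : ℝ) ∈ I) {f g : ℝ → ℝ} (hg : ContinuousOn g I)
    (hf : ∀ t ∈ I, HasDerivAt f (g t * f t) t) (hf0 : f 0 = 0) : ∀ t ∈ I, f t = 0 := by
  intro t ht
  have hmin : min 0 t ∈ I := by rcases min_choice 0 t with h | h <;> rw [h] <;> assumption
  have hmax : max 0 t ∈ I := by rcases max_choice 0 t with h | h <;> rw [h] <;> assumption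
  obtain ⟨p, hpI, hp⟩ : ∃ p ∈ I, p < min 0 t := by
    obtain ⟨ε, hε, hball⟩ := Metric.isOpen_iff.1 hI _ hmin
    refine ⟨min 0 t - ε / 2, hball ?_, by linarith⟩
    rw [Metric.mem_ball, Real.dist_eq, abs_lt]
    constructor <;> linarith
  obtain ⟨q, hqI, hq⟩ : ∃ q ∈ I, max 0 t < q := by
    obtain ⟨ε, hε, hball⟩ := Metric.isOpen_iff.1 hI _ hmax
    refine ⟨max 0 t + ε / 2, hball ?_, by linarith⟩
    rw [Metric.mem_ball, Real.dist_eq, abs_lt]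
    constructor <;> linarith
  have hsub : Icc p q ⊆ I := hconn.out hpI hqI
  obtain ⟨C, hC⟩ := isCompact_Icc.exists_bound_of_continuousOn (hg.mono hsub)
  have hmem : ∀ s ∈ Ioo p q, s ∈ I := fun s hs => hsub (Ioo_subset_Icc_self hs)
  refine ODE_solution_unique_of_mem_Ioo (v := fun s y => g s * y) (s := fun _ => univ)
    (K := C.toNNReal) (t₀ := 0) (a := p) (b := q) (g := fun _ => 0) ?_ ?_ ?_ ?_ hf0 ?_
  · intro s hs
    refine LipschitzOnWith.of_dist_le_mul fun y _ z _ => ?_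
    rw [Real.dist_eq, Real.dist_eq, ← mul_sub, abs_mul]
    exact mul_le_mul_of_nonneg_right
      ((hC s (Ioo_subset_Icc_self hs)).trans (Real.le_coe_toNNReal C)) (abs_nonneg _)
  · exact ⟨hp.trans_le (min_le_left _ _), (le_max_left _ _).trans_lt hq⟩
  · exact fun s hs => ⟨hf s (hmem s hs), mem_univ _⟩
  · exact fun s _ => ⟨by simpa using hasDerivAt_const s (0 : ℝ), mem_univ _⟩
  · exact ⟨hp.trans_le (min_le_right _ _), (le_max_right _ _).trans_lt hq⟩

/-- The symmetric covariant differential of a `1`-form, as a bilinear form at the point `x`. -/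
noncomputable def covSym {n : ℕ} (Γ : Fin n → Fin n → Fin n → (Fin n → ℝ) → ℝ)
    (ω : (Fin n → ℝ) → Fin n → ℝ) (x : Fin n → ℝ) :
    (Fin n → ℝ) →ₗ[ℝ] (Fin n → ℝ) →ₗ[ℝ] ℝ :=
  LinearMap.mk₂ ℝ (fun u v =>
    (∑ k, (fderiv ℝ (fun y => ω y k) x u * v k + fderiv ℝ (fun y => ω y k) x v * u k)) / 2 -
      ∑ k, ω x k * ∑ i, ∑ j, Γ k i j x * u i * v j)
    (by
      intro u u' v
      simp only [map_add, Pi.add_apply, mul_add, add_mul, Finset.sum_add_distrib]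
      ring)
    (by
      intro c u v
      have h' : ∀ k (r : ℝ), ω x k * (c * r) = c * (ω x k * r) := by intros; ring
      simp only [map_smul, Pi.smul_apply, smul_eq_mul, ← Finset.mul_sum, h', mul_assoc,
        mul_left_comm _ c, ← mul_add]
      ring)
    (by
      intro u v v'
      simp only [map_add, Pi.add_apply, mul_add, add_mul, Finset.sum_add_distrib]
      ring)
    (by
      intro c u v
      have h : ∀ k i j, Γ k i j x * u i * (c * v j) = c * (Γ k i j x * u i * v j) := by
        intros; ring
      have h' : ∀ k (r : ℝ), ω x k * (c * r) = c * (ω x k * r) := by intros; ring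
      simp only [map_smul, Pi.smul_apply, smul_eq_mul, h, ← Finset.mul_sum, h', mul_assoc,
        mul_left_comm _ c, ← mul_add]
      ring)

lemma covSym_apply {n : ℕ} (Γ : Fin n → Fin n → Fin n → (Fin n → ℝ) → ℝ)
    (ω : (Fin n → ℝ) → Fin n → ℝ) (x u v : Fin n → ℝ) :
    covSym Γ ω x u v =
      (∑ k, (fderiv ℝ (fun y => ω y k) x u * v k + fderiv ℝ (fun y => ω y k) x v * u k)) / 2 -
        ∑ k, ω x k * ∑ i, ∑ j, Γ k i j x * u i * v j := rfl

lemma covSym_comm {n : ℕ} {U : Set (Fin n → ℝ)}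
    {Γ : Fin n → Fin n → Fin n → (Fin n → ℝ) → ℝ} (hΓ : IsTorsionFreeConn U Γ)
    (ω : (Fin n → ℝ) → Fin n → ℝ) (x u v : Fin n → ℝ) :
    covSym Γ ω x u v = covSym Γ ω x v u := by
  simp only [covSym_apply]
  congr 1
  · simp only [add_comm]
  · refine Finset.sum_congr rfl fun k _ => ?_
    rw [Finset.sum_comm]
    congr 1
    refine Finset.sum_congr rfl fun j _ => Finset.sum_congr rfl fun i _ => ?_
    rw [hΓ.2 k i j x]
    ring

lemma covSym_self {n : ℕ} (Γ : Fin n → Fin n → Fin n → (Fin n → ℝ) → ℝ)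
    (ω : (Fin n → ℝ) → Fin n → ℝ) (x v : Fin n → ℝ) :
    covSym Γ ω x v v = ∑ k, fderiv ℝ (fun y => ω y k) x v * v k -
        ∑ k, ω x k * ∑ i, ∑ j, Γ k i j x * v i * v j := by
  rw [covSym_apply, Finset.sum_add_distrib, add_self_div_two]

/-- Leibniz rule for the symmetric covariant differential of a combination of `1`-forms. -/
lemma covSym_sum_mul {n : ℕ} (Γ : Fin n → Fin n → Fin n → (Fin n → ℝ) → ℝ)
    {η : Fin n → (Fin n → ℝ) → Fin n → ℝ} {c : Fin n → (Fin n → ℝ) → ℝ} {x : Fin n → ℝ}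
    (hη : ∀ m k, DifferentiableAt ℝ (fun y => η m y k) x)
    (hc : ∀ m, DifferentiableAt ℝ (c m) x) (u v : Fin n → ℝ) :
    covSym Γ (fun y k => ∑ m, c m y * η m y k) x u v =
      ∑ m, c m x * covSym Γ (η m) x u v +
        ∑ m, (fderiv ℝ (c m) x u * ∑ k, η m x k * v k +
          fderiv ℝ (c m) x v * ∑ k, η m x k * u k) / 2 := by
  have hfd : ∀ k w, fderiv ℝ (fun y => ∑ m, c m y * η m y k) x w =
      ∑ m, (c m x * fderiv ℝ (fun y => η m y k) x w + η m x k * fderiv ℝ (c m) x w) := by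
    intro k w
    rw [fderiv_fun_sum fun m _ => (hc m).fun_mul (hη m k)]
    simp only [sum_apply]
    refine Finset.sum_congr rfl fun m _ => ?_
    rw [fderiv_fun_mul (hc m) (hη m k)]
    simp
  simp only [covSym_apply, hfd, Finset.sum_mul, ← Finset.sum_add_distrib]
  rw [Finset.sum_comm, Finset.sum_comm (s := Finset.univ) (t := Finset.univ)
    (f := fun k m => c m x * η m x k * _), Finset.sum_div, ← Finset.sum_sub_distrib]
  refine Finset.sum_congr rfl fun m _ => ?_
  have hsplit : ∑ k, c m x * η m x k * ∑ i, ∑ j, Γ k i j x * u i * v j =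
      c m x * ∑ k, η m x k * ∑ i, ∑ j, Γ k i j x * u i * v j := by
    simp only [Finset.mul_sum, mul_assoc]
  rw [hsplit, mul_sub, sub_add_eq_add_sub]
  congr 1
  rw [← mul_div_assoc, ← add_div, Finset.mul_sum, Finset.mul_sum, Finset.mul_sum,
    ← Finset.sum_add_distrib, ← Finset.sum_add_distrib]
  congr 1
  exact Finset.sum_congr rfl fun k _ => by ring

/-- The derivative of `ω(γ̇)` along a geodesic. -/
lemma IsGeodesicOn.hasDerivAt_pairing {n : ℕ} {U : Set (Fin n → ℝ)} (hU : IsOpen U)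
    {Γ : Fin n → Fin n → Fin n → (Fin n → ℝ) → ℝ} {ω : (Fin n → ℝ) → Fin n → ℝ}
    (hω : ContDiffOn ℝ (⊤ : ℕ∞) ω U) {I : Set ℝ} (hI : IsOpen I) {γ : ℝ → Fin n → ℝ}
    (hγ : IsGeodesicOn U Γ I γ) {t : ℝ} (ht : t ∈ I) :
    HasDerivAt (fun s => ∑ k, ω (γ s) k * deriv (fun u => γ u k) s)
      (covSym Γ ω (γ t) (fun k => deriv (fun u => γ u k) t) (fun k => deriv (fun u => γ u k) t))
      t := by
  obtain ⟨hmem, hsm, hgeo⟩ := hγ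
  have hcomp : ∀ k, ContDiffOn ℝ 2 (fun u => γ u k) I := fun k => contDiffOn_pi.1 hsm k
  have hvel : ∀ k, HasDerivAt (fun u => γ u k) (deriv (fun u => γ u k) t) t := fun k =>
    (((hcomp k).contDiffAt (hI.mem_nhds ht)).differentiableAt (by norm_num)).hasDerivAt
  have hacc : ∀ k, HasDerivAt (fun s => deriv (fun u => γ u k) s)
      (-∑ i, ∑ j, Γ k i j (γ t) * deriv (fun u => γ u i) t * deriv (fun u => γ u j) t) t := by
    intro k
    rw [← eq_neg_of_add_eq_zero_left (hgeo t ht k)]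
    exact ((((hcomp k).deriv_of_isOpen hI (m := 1) (by norm_num)).contDiffAt
      (hI.mem_nhds ht)).differentiableAt (by norm_num)).hasDerivAt
  have hform : ∀ k, HasDerivAt (fun s => ω (γ s) k)
      (fderiv ℝ (fun y => ω y k) (γ t) (fun k => deriv (fun u => γ u k) t)) t := by
    intro k
    have hd : DifferentiableAt ℝ (fun y => ω y k) (γ t) :=
      ((contDiffOn_pi.1 hω k).contDiffAt (hU.mem_nhds (hmem t ht))).differentiableAt (by simp)
    exact hd.hasFDerivAt.comp_hasDerivAt t (hasDerivAt_pi.2 hvel)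
  refine (HasDerivAt.fun_sum fun k (_ : k ∈ Finset.univ) =>
    (hform k).fun_mul (hacc k)).congr_deriv ?_
  rw [covSym_self, Finset.sum_add_distrib]
  simp [sub_eq_add_neg]

/-- Local existence of geodesics with prescribed initial position and velocity. -/
lemma exists_isGeodesicOn {n : ℕ} {U : Set (Fin n → ℝ)} (hU : IsOpen U)
    {Γ : Fin n → Fin n → Fin n → (Fin n → ℝ) → ℝ} (hΓ : IsTorsionFreeConn U Γ)
    {x : Fin n → ℝ} (hx : x ∈ U) (v : Fin n → ℝ) :
    ∃ ε > (0 : ℝ), ∃ γ : ℝ → Fin n → ℝ, IsGeodesicOn U Γ (Ioo (-ε) ε) γ ∧ γ 0 = x ∧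
      ∀ k, deriv (fun u => γ u k) 0 = v k := by
  set F : (Fin n → ℝ) × (Fin n → ℝ) → (Fin n → ℝ) × (Fin n → ℝ) :=
    fun p => (p.2, fun k => -∑ i, ∑ j, Γ k i j p.1 * p.2 i * p.2 j) with hF
  have hFsm : ContDiffOn ℝ 1 F (U ×ˢ univ) := by
    refine contDiffOn_snd.prodMk (contDiffOn_pi.2 fun k => ContDiffOn.neg ?_)
    refine ContDiffOn.sum fun i _ => ContDiffOn.sum fun j _ => ?_
    have hco : ∀ l, ContDiffOn ℝ 1 (fun p : (Fin n → ℝ) × (Fin n → ℝ) => p.2 l) (U ×ˢ univ) :=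
      fun l => contDiffOn_pi.1 contDiffOn_snd l
    refine ContDiffOn.mul (ContDiffOn.mul ?_ (hco i)) (hco j)
    exact ((hΓ.1 k i j).of_le (by exact_mod_cast le_top)).comp contDiffOn_fst fun p hp => hp.1
  have hFx : ContDiffAt ℝ 1 F (x, v) :=
    hFsm.contDiffAt ((hU.prod isOpen_univ).mem_nhds ⟨hx, mem_univ v⟩)
  obtain ⟨α, hα0, ε, hε, hα⟩ :=
    hFx.exists_forall_mem_closedBall_exists_eq_forall_mem_Ioo_hasDerivAt₀ 0
  simp only [zero_sub, zero_add] at hα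
  have h0mem : (0 : ℝ) ∈ Ioo (-ε) ε := ⟨by linarith, hε⟩
  have hpre : α ⁻¹' (U ×ˢ univ) ∈ nhds 0 :=
    (hα 0 h0mem).continuousAt.preimage_mem_nhds
      (by rw [hα0]; exact (hU.prod isOpen_univ).mem_nhds ⟨hx, mem_univ v⟩)
  obtain ⟨δ, hδ, hball⟩ := Metric.mem_nhds_iff.1 hpre
  refine ⟨min ε δ, lt_min hε hδ, fun t => (α t).1, ?_⟩
  have hαd : ∀ t ∈ Ioo (-min ε δ) (min ε δ), HasDerivAt α (F (α t)) t := fun t ht =>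
    hα t ⟨by linarith [ht.1, min_le_left ε δ], by linarith [ht.2, min_le_left ε δ]⟩
  have hαU : MapsTo α (Ioo (-min ε δ) (min ε δ)) (U ×ˢ univ) := fun t ht => hball <| by
    rw [Metric.mem_ball, Real.dist_eq, sub_zero, abs_lt]
    exact ⟨by linarith [ht.1, min_le_right ε δ], by linarith [ht.2, min_le_right ε δ]⟩
  have h0 : (0 : ℝ) ∈ Ioo (-min ε δ) (min ε δ) := by
    have := lt_min hε hδ
    exact ⟨by linarith, this⟩
  have hαc : ContinuousOn α (Ioo (-min ε δ) (min ε δ)) := fun t ht =>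
    (hαd t ht).continuousAt.continuousWithinAt
  have hα1 : ContDiffOn ℝ 1 α (Ioo (-min ε δ) (min ε δ)) := by
    rw [show (1 : WithTop ℕ∞) = 0 + 1 from rfl, contDiffOn_succ_iff_deriv_of_isOpen isOpen_Ioo]
    refine ⟨fun t ht => (hαd t ht).differentiableAt.differentiableWithinAt, by simp, ?_⟩
    rw [contDiffOn_zero]
    exact (hFsm.continuousOn.comp hαc hαU).congr fun t ht => (hαd t ht).deriv
  have hpos : ∀ t ∈ Ioo (-min ε δ) (min ε δ), HasDerivAt (fun s => (α s).1) (α t).2 t :=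
    fun t ht => (hαd t ht).fst
  have hposk : ∀ t ∈ Ioo (-min ε δ) (min ε δ), ∀ k,
      deriv (fun s => (α s).1 k) t = (α t).2 k :=
    fun t ht k => (hasDerivAt_pi.1 (hpos t ht) k).deriv
  refine ⟨⟨fun t ht => (hαU ht).1, ?_, fun t ht k => ?_⟩, by simp [hα0], fun k => ?_⟩
  · rw [show (2 : WithTop ℕ∞) = 1 + 1 from rfl, contDiffOn_succ_iff_deriv_of_isOpen isOpen_Ioo]
    refine ⟨fun t ht => (hpos t ht).differentiableAt.differentiableWithinAt, by simp, ?_⟩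
    exact hα1.snd.congr fun t ht => (hpos t ht).deriv
  · have hev : (fun s => deriv (fun u => (α u).1 k) s) =ᶠ[nhds t] fun s => (α s).2 k := by
      filter_upwards [isOpen_Ioo.mem_nhds ht] with s hs using hposk s hs k
    rw [hev.deriv_eq, (hasDerivAt_pi.1 (hαd t ht).snd k).deriv]
    simp [hF, hposk t ht]
  · rw [hposk 0 h0 k, hα0]

/-- The velocity criterion: a totally geodesic foliation has vanishing symmetric covariant
differential on its tangent vectors. -/
lemma TotallyGeodesic.covSym_eq_zero {n : ℕ} {U : Set (Fin n → ℝ)} (hU : IsOpen U)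
    {Γ : Fin n → Fin n → Fin n → (Fin n → ℝ) → ℝ} (hΓ : IsTorsionFreeConn U Γ)
    {ω : (Fin n → ℝ) → Fin n → ℝ} (hω : ContDiffOn ℝ (⊤ : ℕ∞) ω U)
    (h : TotallyGeodesic U Γ ω) {x : Fin n → ℝ} (hx : x ∈ U) {v : Fin n → ℝ}
    (hv : ∑ k, ω x k * v k = 0) : covSym Γ ω x v v = 0 := by
  obtain ⟨ε, hε, γ, hγ, hγ0, hγ'⟩ := exists_isGeodesicOn hU hΓ hx v
  have h0 : (0 : ℝ) ∈ Ioo (-ε) ε := ⟨by linarith, hε⟩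
  have hzero := h _ isOpen_Ioo ordConnected_Ioo h0 γ hγ (by simpa [hγ0, hγ'] using hv)
  have hd := hγ.hasDerivAt_pairing hU hω isOpen_Ioo h0
  have hev : (fun s => ∑ k, ω (γ s) k * deriv (fun u => γ u k) s) =ᶠ[nhds 0] fun _ => 0 := by
    filter_upwards [isOpen_Ioo.mem_nhds h0] with s hs using hzero s hs
  have := hd.unique ((hasDerivAt_const (0 : ℝ) (0 : ℝ)).congr_of_eventuallyEq hev)
  simpa [hγ0, hγ'] using this

/-- Conversely, a foliation whose symmetric covariant differential vanishes on tangent vectors is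
totally geodesic. -/
lemma totallyGeodesic_of_covSym {n : ℕ} {U : Set (Fin n → ℝ)} (hU : IsOpen U)
    {Γ : Fin n → Fin n → Fin n → (Fin n → ℝ) → ℝ} (hΓ : IsTorsionFreeConn U Γ)
    {ω : (Fin n → ℝ) → Fin n → ℝ} (hω : ContDiffOn ℝ (⊤ : ℕ∞) ω U) (hne : ∀ x ∈ U, ω x ≠ 0)
    (h : ∀ x ∈ U, ∀ v : Fin n → ℝ, ∑ k, ω x k * v k = 0 → covSym Γ ω x v v = 0) :
    TotallyGeodesic U Γ ω := by
  intro I hI hconn h0 γ hγ hγ0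
  set vel : ℝ → Fin n → ℝ := fun t k => deriv (fun u => γ u k) t with hvel
  set f : ℝ → ℝ := fun t => ∑ k, ω (γ t) k * vel t k with hf
  set nsq : ℝ → ℝ := fun t => ∑ k, ω (γ t) k * ω (γ t) k with hnsq
  set N : ℝ → Fin n → ℝ := fun t k => ω (γ t) k / nsq t with hN
  have hnsq0 : ∀ t ∈ I, nsq t ≠ 0 := fun t ht hz =>
    hne (γ t) (hγ.1 t ht) (dotProduct_self_eq_zero.1 hz)
  have hγc : ContinuousOn γ I := hγ.2.1.continuousOn
  have hωc : ∀ k, ContinuousOn (fun t => ω (γ t) k) I := fun k =>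
    (contDiffOn_pi.1 hω k).continuousOn.comp hγc hγ.1
  have hvelc : ∀ k, ContinuousOn (fun t => vel t k) I := fun k =>
    ((contDiffOn_pi.1 hγ.2.1 k).deriv_of_isOpen hI (m := 1) (by norm_num)).continuousOn
  have hNc : ∀ k, ContinuousOn (fun t => N t k) I := fun k =>
    (hωc k).div (continuousOn_finsetSum _ fun k _ => (hωc k).mul (hωc k)) hnsq0
  have hcov : ∀ u v : ℝ → Fin n → ℝ, (∀ k, ContinuousOn (fun t => u t k) I) →
      (∀ k, ContinuousOn (fun t => v t k) I) →
      ContinuousOn (fun t => covSym Γ ω (γ t) (u t) (v t)) I := by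
    intro u v hu hv
    have hfd : ∀ k (w : ℝ → Fin n → ℝ), (∀ k, ContinuousOn (fun t => w t k) I) →
        ContinuousOn (fun t => fderiv ℝ (fun y => ω y k) (γ t) (w t)) I := fun k w hw =>
      (((contDiffOn_pi.1 hω k).continuousOn_fderiv_of_isOpen hU (by simp)).comp hγc
        hγ.1).clm_apply (continuousOn_pi.2 hw)
    simp only [covSym_apply]
    refine ContinuousOn.sub (ContinuousOn.div_const (continuousOn_finsetSum _ fun k _ =>
      ((hfd k u hu).mul (hv k)).add ((hfd k v hv).mul (hu k))) 2) ?_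
    refine continuousOn_finsetSum _ fun k _ => (hωc k).mul
      (continuousOn_finsetSum _ fun i _ => continuousOn_finsetSum _ fun j _ =>
        ((((hΓ.1 k i j).continuousOn.comp hγc hγ.1).mul (hu i)).mul (hv j)))
  have hfc : ContinuousOn f I := continuousOn_finsetSum _ fun k _ => (hωc k).mul (hvelc k)
  refine eq_zero_of_hasDerivAt_mul hI hconn h0 (f := f)
    (g := fun t => 2 * covSym Γ ω (γ t) (vel t) (N t) - f t * covSym Γ ω (γ t) (N t) (N t))
    ((continuousOn_const.mul (hcov _ _ hvelc hNc)).sub (hfc.mul (hcov _ _ hNc hNc)))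
    (fun t ht => ?_) hγ0
  have hN1 : ∑ k, ω (γ t) k * N t k = 1 := by
    simp only [hN, ← mul_div_assoc, ← Finset.sum_div]
    exact div_self (hnsq0 t ht)
  have hker := h (γ t) (hγ.1 t ht) (vel t - f t • N t) (by
    simp only [Pi.sub_apply, Pi.smul_apply, smul_eq_mul, mul_sub, Finset.sum_sub_distrib,
      mul_left_comm _ (f t), ← Finset.mul_sum, hN1]
    simp [hf])
  refine (hγ.hasDerivAt_pairing hU hω hI ht).congr_deriv ?_
  simp only [map_sub, map_smul, LinearMap.sub_apply, LinearMap.smul_apply, smul_eq_mul,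
    covSym_comm hΓ ω (γ t) (N t) (vel t)] at hker
  change covSym Γ ω (γ t) (vel t) (vel t) = _
  linear_combination hker

/-- Total geodesy only depends on the form on `U` up to sign. -/
lemma TotallyGeodesic.of_eq_neg {n : ℕ} {U : Set (Fin n → ℝ)}
    {Γ : Fin n → Fin n → Fin n → (Fin n → ℝ) → ℝ} {ω ω' : (Fin n → ℝ) → Fin n → ℝ}
    (h : TotallyGeodesic U Γ ω) (heq : ∀ x ∈ U, ∀ k, ω x k = -ω' x k) :
    TotallyGeodesic U Γ ω' := by
  intro I hI hconn h0 γ hγ hγ0 t ht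
  have hneg : ∀ s ∈ I, ∑ k, ω (γ s) k * deriv (fun u => γ u k) s =
      -∑ k, ω' (γ s) k * deriv (fun u => γ u k) s := by
    intro s hs
    simp only [heq _ (hγ.1 s hs), neg_mul, Finset.sum_neg_distrib]
  have := h I hI hconn h0 γ hγ (by rw [hneg 0 h0, hγ0, neg_zero]) t ht
  rwa [hneg t ht, neg_eq_zero] at this

/-- A quadratic form vanishes on the hyperplane `∑ cᵢ wᵢ = 0` as soon as it vanishes on the vectors
`cⱼ eᵢ - cᵢ eⱼ`. -/
lemma sum_quadratic_eq_zero {n : ℕ} {M : Fin n → Fin n → ℝ} {c w : Fin n → ℝ}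
    (hc : ∀ i, c i ≠ 0)
    (hM : ∀ i j, i ≠ j → c j ^ 2 * M i i - 2 * c i * c j * M i j + c i ^ 2 * M j j = 0)
    (hw : ∑ i, c i * w i = 0) : ∑ i, ∑ j, w i * (w j * M i j) = 0 := by
  have hMij : ∀ i j, w i * (w j * M i j) =
      M i i / (2 * c i) * w i * (c j * w j) + c i * w i * (M j j / (2 * c j) * w j) := by
    intro i j
    have hi := hc i
    have hj := hc j
    rcases eq_or_ne i j with rfl | hij
    · field_simp
      ring
    · have := hM i j hij
      field_simp
      linear_combination (-w i * w j) * this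
  simp only [hMij, Finset.sum_add_distrib, ← Finset.mul_sum, ← Finset.sum_mul, hw, mul_zero,
    zero_mul, Finset.sum_const_zero, add_zero]

section Frame

variable {n : ℕ} {U : Set (Fin n → ℝ)} {Γ : Fin n → Fin n → Fin n → (Fin n → ℝ) → ℝ}
  {η X : Fin n → (Fin n → ℝ) → Fin n → ℝ} {c : Fin n → (Fin n → ℝ) → ℝ}

lemma IsDualFrame.eq_sum (hX : IsDualFrame U η X) {x : Fin n → ℝ} (hx : x ∈ U)
    (v : Fin n → ℝ) : v = ∑ i, (∑ k, η i x k * v k) • X i x := by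
  have hmul : (Matrix.of fun i k => η i x k) * (Matrix.of fun i k => X i x k).transpose = 1 := by
    ext i j
    simpa [Matrix.mul_apply, Matrix.one_apply] using hX.2 x hx i j
  have h := congrArg (fun A => Matrix.mulVec A v) (mul_eq_one_comm.1 hmul)
  simp only [← Matrix.mulVec_mulVec, Matrix.one_mulVec] at h
  conv_lhs => rw [← h]
  ext l
  simp [Matrix.mulVec, dotProduct, mul_comm]

lemma IsDualFrame.pairing_sum (hX : IsDualFrame U η X) {x : Fin n → ℝ} (hx : x ∈ U)
    (c : Fin n → ℝ) (j : Fin n) : ∑ k, (∑ i, c i * η i x k) * X j x k = c j := by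
  simp only [Finset.sum_mul]
  rw [Finset.sum_comm]
  simp only [mul_assoc, ← Finset.mul_sum, hX.2 x hx]
  simp

lemma contDiffOn_sum_mul (hη : ∀ m, ContDiffOn ℝ (⊤ : ℕ∞) (η m) U)
    (hc : ∀ m, ContDiffOn ℝ (⊤ : ℕ∞) (c m) U) :
    ContDiffOn ℝ (⊤ : ℕ∞) (fun x k => ∑ m, c m x * η m x k) U :=
  contDiffOn_pi.2 fun k => ContDiffOn.sum fun m _ => (hc m).mul (contDiffOn_pi.1 (hη m) k)

/-- A combination `∑ cᵢ ηᵢ` of a coframe with nonvanishing coefficients defines a totally geodesic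
foliation iff its symmetric covariant differential vanishes on the vectors `cⱼ Xᵢ - cᵢ Xⱼ`. -/
lemma totallyGeodesic_sum_iff (hU : IsOpen U) (hΓ : IsTorsionFreeConn U Γ)
    (hη : ∀ m, ContDiffOn ℝ (⊤ : ℕ∞) (η m) U) (hX : IsDualFrame U η X)
    (hc : ∀ m, ContDiffOn ℝ (⊤ : ℕ∞) (c m) U) (hcnz : ∀ i, ∀ x ∈ U, c i x ≠ 0)
    (hn : 0 < n) :
    TotallyGeodesic U Γ (fun x k => ∑ m, c m x * η m x k) ↔
      ∀ i j, i ≠ j → ∀ x ∈ U,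
        c j x ^ 2 * covSym Γ (fun x k => ∑ m, c m x * η m x k) x (X i x) (X i x) -
          2 * c i x * c j x * covSym Γ (fun x k => ∑ m, c m x * η m x k) x (X i x) (X j x) +
          c i x ^ 2 * covSym Γ (fun x k => ∑ m, c m x * η m x k) x (X j x) (X j x) = 0 := by
  have hsm := contDiffOn_sum_mul hη hc
  constructor
  · intro h i j _ x hx
    have hpair : ∑ k, (∑ m, c m x * η m x k) * (c j x • X i x - c i x • X j x) k = 0 := by
      simp only [Pi.sub_apply, Pi.smul_apply, smul_eq_mul, mul_sub, Finset.sum_sub_distrib,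
        mul_left_comm _ (c _ x), ← Finset.mul_sum, hX.pairing_sum hx fun m => c m x]
      ring
    have := h.covSym_eq_zero hU hΓ hsm hx hpair
    simp only [map_sub, map_smul, LinearMap.sub_apply, LinearMap.smul_apply, smul_eq_mul,
      covSym_comm hΓ _ x (X j x) (X i x)] at this
    linear_combination this
  · intro h
    refine totallyGeodesic_of_covSym hU hΓ hsm (fun x hx hz => ?_) fun x hx v hv => ?_
    · refine hcnz ⟨0, hn⟩ x hx ?_
      rw [← hX.pairing_sum hx (fun m => c m x)]
      exact Finset.sum_eq_zero fun k _ => by rw [congrFun hz k]; simp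
    · have hv' := hX.eq_sum hx v
      have hw : ∑ i, c i x * ∑ k, η i x k * v k = 0 := by
        rw [← hv]
        simp only [Finset.mul_sum, Finset.sum_mul, mul_assoc]
        exact Finset.sum_comm
      have := sum_quadratic_eq_zero
        (M := fun i j => covSym Γ (fun x k => ∑ m, c m x * η m x k) x (X j x) (X i x))
        (fun i => hcnz i x hx)
        (fun i j hij => by simpa only [covSym_comm hΓ _ x (X j x) (X i x)] using h i j hij x hx) hw
      rw [hv']
      simpa only [map_sum, map_smul, LinearMap.sum_apply, LinearMap.smul_apply, smul_eq_mul,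
        Finset.mul_sum] using this

/-- The symmetric covariant differential of a totally geodesic form of the coframe vanishes on the
remaining frame vectors. -/
lemma TotallyGeodesic.covSym_frame_eq_zero (hU : IsOpen U) (hΓ : IsTorsionFreeConn U Γ)
    (hX : IsDualFrame U η X) {m : Fin n} (hη : ContDiffOn ℝ (⊤ : ℕ∞) (η m) U)
    (h : TotallyGeodesic U Γ (η m)) {x : Fin n → ℝ} (hx : x ∈ U) {i j : Fin n}
    (hi : m ≠ i) (hj : m ≠ j) : covSym Γ (η m) x (X i x) (X j x) = 0 := by
  have hpi : ∑ k, η m x k * X i x k = 0 := by rw [hX.2 x hx, if_neg hi]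
  have hpj : ∑ k, η m x k * X j x k = 0 := by rw [hX.2 x hx, if_neg hj]
  have hii := h.covSym_eq_zero hU hΓ hη hx hpi
  have hjj := h.covSym_eq_zero hU hΓ hη hx hpj
  have hij := h.covSym_eq_zero hU hΓ hη hx (v := X i x + X j x) (by
    simp only [Pi.add_apply, mul_add, Finset.sum_add_distrib, hpi, hpj, add_zero])
  simp only [map_add, LinearMap.add_apply, covSym_comm hΓ _ x (X j x) (X i x)] at hij
  linarith

/-- For a totally geodesic coframe, the foliation of `∑ cᵢ ηᵢ` is totally geodesic iff a relation
between the coefficients `cᵢ` and the connection holds for each pair of indices. -/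
lemma totallyGeodesic_sum_iff_of_coframe (hU : IsOpen U) (hΓ : IsTorsionFreeConn U Γ)
    (hη : ∀ m, ContDiffOn ℝ (⊤ : ℕ∞) (η m) U) (hX : IsDualFrame U η X)
    (hg : ∀ m, TotallyGeodesic U Γ (η m))
    (hc : ∀ m, ContDiffOn ℝ (⊤ : ℕ∞) (c m) U) (hcnz : ∀ i, ∀ x ∈ U, c i x ≠ 0)
    (hn : 0 < n) :
    TotallyGeodesic U Γ (fun x k => ∑ m, c m x * η m x k) ↔
      ∀ i j, i ≠ j → ∀ x ∈ U,
        c i x * (covSym Γ (η j) x (X j x) (X j x) - 2 * covSym Γ (η i) x (X i x) (X j x)) +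
        c j x * (covSym Γ (η i) x (X i x) (X i x) - 2 * covSym Γ (η j) x (X i x) (X j x)) +
        (c i x * (fderiv ℝ (c j) x (X j x) / c j x - fderiv ℝ (c i) x (X j x) / c i x) -
          c j x * (fderiv ℝ (c j) x (X i x) / c j x - fderiv ℝ (c i) x (X i x) / c i x)) = 0 := by
  rw [totallyGeodesic_sum_iff hU hΓ hη hX hc hcnz hn]
  refine forall₄_congr fun i j hij x => forall_congr' fun hx => ?_
  have hdη : ∀ m k, DifferentiableAt ℝ (fun y => η m y k) x := fun m k =>
    ((contDiffOn_pi.1 (hη m) k).contDiffAt (hU.mem_nhds hx)).differentiableAt (by simp)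
  have hdc : ∀ m, DifferentiableAt ℝ (c m) x := fun m =>
    ((hc m).contDiffAt (hU.mem_nhds hx)).differentiableAt (by simp)
  have hvan : ∀ {m p q}, m ≠ p → m ≠ q → covSym Γ (η m) x (X p x) (X q x) = 0 :=
    fun {m _ _} hp hq => (hg m).covSym_frame_eq_zero hU hΓ hX (hη m) hx hp hq
  have hdiag : ∀ p, covSym Γ (fun x k => ∑ m, c m x * η m x k) x (X p x) (X p x) =
      c p x * covSym Γ (η p) x (X p x) (X p x) + fderiv ℝ (c p) x (X p x) := by
    intro p
    rw [covSym_sum_mul Γ hdη hdc, Finset.sum_eq_single p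
      (fun m _ hm => by rw [hvan hm hm, mul_zero]) (by simp)]
    simp [hX.2 x hx]
  have hoff : covSym Γ (fun x k => ∑ m, c m x * η m x k) x (X i x) (X j x) =
      c i x * covSym Γ (η i) x (X i x) (X j x) + c j x * covSym Γ (η j) x (X i x) (X j x) +
        (fderiv ℝ (c j) x (X i x) + fderiv ℝ (c i) x (X j x)) / 2 := by
    rw [covSym_sum_mul Γ hdη hdc, Finset.sum_eq_add i j hij
      (fun m _ hm => by rw [hvan hm.1 hm.2, mul_zero]) (by simp) (by simp)]
    simp [hX.2 x hx, ← Finset.sum_div, Finset.sum_add_distrib]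
  have hi := hcnz i x hx
  have hj := hcnz j x hx
  rw [hdiag, hdiag, hoff]
  refine (Eq.congr_left ?_).trans (mul_eq_zero_iff_left (mul_ne_zero hi hj))
  field_simp
  ring

end Frame

/-- for a normalized geodesic `(n+2)`-web and a foliation given by
`ω = b₁ω₁ + … + b_nω_n`, the foliation of `ω` is totally geodesic for the web connection
iff `s^a_{ij} = s^b_{ij}` for all `i ≠ j`. -/
theorem statement12 {n : ℕ} (hn : 2 ≤ n)
    (U : Set (Fin n → ℝ)) (hU : IsOpen U) (hUconn : IsConnected U)
    (ωs : Fin (n + 2) → (Fin n → ℝ) → Fin n → ℝ) (hweb : IsWeb U ωs)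
    (X : Fin n → (Fin n → ℝ) → Fin n → ℝ)
    (hX : IsDualFrame U (fun i => ωs (Fin.castLE (by omega) i)) X)
    (a : Fin n → (Fin n → ℝ) → ℝ)
    (hasm : ∀ i, ContDiffOn ℝ (⊤ : ℕ∞) (a i) U)
    (hanz : ∀ i, ∀ x ∈ U, a i x ≠ 0)
    (hane : ∀ i j, i ≠ j → ∀ x ∈ U, a i x ≠ a j x)
    (hnorm1 : ∀ x ∈ U, ∀ m, ωs (⟨n, by omega⟩ : Fin (n + 2)) x m =
      -(∑ i : Fin n, ωs (Fin.castLE (by omega) i) x m))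
    (hnorm2 : ∀ x ∈ U, ∀ m, ωs (⟨n + 1, by omega⟩ : Fin (n + 2)) x m =
      -(∑ i : Fin n, a i x * ωs (Fin.castLE (by omega) i) x m))
    (Γ : Fin n → Fin n → Fin n → (Fin n → ℝ) → ℝ)
    (hΓ : IsTorsionFreeConn U Γ)
    (hg : ∀ i, TotallyGeodesic U Γ (ωs i))
    (b : Fin n → (Fin n → ℝ) → ℝ)
    (hbsm : ∀ i, ContDiffOn ℝ (⊤ : ℕ∞) (b i) U)
    (hbnz : ∀ i, ∀ x ∈ U, b i x ≠ 0)
    (hbne : ∀ i j, i ≠ j → ∀ x ∈ U, b i x ≠ b j x)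
    (hωfol : IsFoliationForm U
      (fun x m => ∑ i : Fin n, b i x * ωs (Fin.castLE (by omega) i) x m)) :
    TotallyGeodesic U Γ
        (fun x m => ∑ i : Fin n, b i x * ωs (Fin.castLE (by omega) i) x m) ↔
      ∀ i j, i ≠ j → ∀ x ∈ U, sInv X a i j x = sInv X b i j x := by
  have hn0 : 0 < n := by omega
  set η : Fin n → (Fin n → ℝ) → Fin n → ℝ := fun i => ωs (Fin.castLE (by omega) i) with hηdef
  have hη : ∀ m, ContDiffOn ℝ (⊤ : ℕ∞) (η m) U := fun m => (hweb.1 _).1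
  have hgη : ∀ m, TotallyGeodesic U Γ (η m) := fun m => hg _
  have hone := (totallyGeodesic_sum_iff_of_coframe (c := fun _ _ => 1) hU hΓ hη hX hgη
    (fun _ => contDiffOn_const) (fun _ _ _ => one_ne_zero) hn0).1
    ((hg ⟨n, by omega⟩).of_eq_neg fun x hx k => by simpa [hηdef] using hnorm1 x hx k)
  have ha := (totallyGeodesic_sum_iff_of_coframe hU hΓ hη hX hgη hasm hanz hn0).1
    ((hg ⟨n + 1, by omega⟩).of_eq_neg fun x hx k => hnorm2 x hx k)
  refine (totallyGeodesic_sum_iff_of_coframe hU hΓ hη hX hgη hbsm hbnz hn0).trans ?_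
  refine forall₄_congr fun i j hij x => forall_congr' fun hx => ?_
  have hone' := hone i j hij x hx
  have ha' := ha i j hij x hx
  have had : a i x - a j x ≠ 0 := sub_ne_zero.2 (hane i j hij x hx)
  have hbd : b i x - b j x ≠ 0 := sub_ne_zero.2 (hbne i j hij x hx)
  simp only [fderiv_fun_const, Pi.zero_apply, zero_apply, zero_div, sub_zero,
    mul_zero, add_zero, one_mul] at hone'
  have hsa : sInv X a i j x =
      -(covSym Γ (η j) x (X j x) (X j x) - 2 * covSym Γ (η i) x (X i x) (X j x)) := by
    rw [sInv, one_div, inv_mul_eq_iff_eq_mul₀ had]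
    linear_combination ha' - a j x * hone'
  rw [hsa, sInv, one_div, eq_inv_mul_iff_mul_eq₀ hbd]
  constructor <;> intro h
  · linear_combination -h + b j x * hone'
  · linear_combination -h + b j x * hone'
end

section
/- Let ⟨ω₁, …, ω_d⟩ and ⟨ω'₁, …, ω'_d⟩ be d-webs of hypersurfaces (d ≥ n + 2) on connected open sets U, U' ⊆ ℝⁿ, geodesic for torsion-free affine connections Γ and Γ' respectively. Let φ : U → U' be a smooth diffeomorphism mapping the first web onto the second, i.e. for each i the pullback φ*(ω'ᵢ) is a nonvanishing smooth multiple of ωᵢ. Then φ is a projective map with respect to the canonical projective structures: the pullback connection φ*Γ' is projectively equivalent to Γ. -/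
open scoped BigOperators

/-- The pullback `φ*Γ'` of a connection `Γ'` under a diffeomorphism `φ` with inverse `ψ`:
`(φ*Γ')ᵏᵢⱼ = Σ ∂ᵢφᵃ ∂ⱼφᵇ (Γ'ᶜ_{ab}∘φ) (∂_cψᵏ∘φ) + Σ ∂ᵢ∂ⱼφᶜ (∂_cψᵏ∘φ)`. -/
noncomputable def pullbackConn {n : ℕ} (φ ψ : (Fin n → ℝ) → Fin n → ℝ)
    (Γ' : Fin n → Fin n → Fin n → (Fin n → ℝ) → ℝ)
    (k i j : Fin n) (x : Fin n → ℝ) : ℝ :=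
  (∑ p, ∑ q, ∑ c, pd i (fun y => φ y p) x * pd j (fun y => φ y q) x *
      Γ' c p q (φ x) * pd c (fun y => ψ y k) (φ x)) +
    ∑ c, pd i (fun y => pd j (fun z => φ z c) y) x * pd c (fun y => ψ y k) (φ x)

lemma webCovectors_eq_zero_of_card_le {n d : ℕ} {l : Fin d → Fin n → ℝ}
    (hl : ∀ σ : Fin n → Fin d, Function.Injective σ → LinearIndependent ℝ (fun i => l (σ i)))
    (S : Finset (Fin d)) (hS : n ≤ S.card) (v : Fin n → ℝ) (hv : ∀ a ∈ S, l a ⬝ᵥ v = 0) :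
    v = 0 := by
  obtain ⟨R, hRS, hR⟩ := Finset.exists_subset_card_eq hS
  let σ : Fin n → Fin d := fun i => R.orderEmbOfFin hR i
  have hσ : Function.Injective σ := (R.orderEmbOfFin hR).injective
  have hli := hl σ hσ
  have hmem : ∀ i, σ i ∈ S := fun i => hRS (R.orderEmbOfFin_mem hR i)
  have hunit : IsUnit (Matrix.of fun i => l (σ i)) :=
    Matrix.linearIndependent_rows_iff_isUnit.mp hli
  have hinj := Matrix.mulVec_injective_of_isUnit hunit
  apply hinj
  rw [Matrix.mulVec_zero]
  funext i
  exact hv _ (hmem i)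

/-- A symmetric bilinear map leaving the kernels of `n + 2` covectors in general position
invariant has the form `(u, v) ↦ ρ(u) v + ρ(v) u`. -/
lemma exists_covector_of_preserves_ker {n d : ℕ} (hd : n + 2 ≤ d) {l : Fin d → Fin n → ℝ}
    (hl : ∀ σ : Fin n → Fin d, Function.Injective σ → LinearIndependent ℝ (fun i => l (σ i)))
    (T : (Fin n → ℝ) →ₗ[ℝ] (Fin n → ℝ) →ₗ[ℝ] (Fin n → ℝ)) (hT : ∀ u v, T u v = T v u)
    (hker : ∀ a v, l a ⬝ᵥ v = 0 → l a ⬝ᵥ T v v = 0) :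
    ∃ ρ : (Fin n → ℝ) →ₗ[ℝ] ℝ, ∀ u v, T u v = ρ u • v + ρ v • u := by
  have hzero := webCovectors_eq_zero_of_card_le hl
  have hpol : ∀ a u v, l a ⬝ᵥ u = 0 → l a ⬝ᵥ v = 0 → l a ⬝ᵥ T u v = 0 := by
    intro a u v hu hv
    have h := hker a (u + v) (by rw [dotProduct_add, hu, hv, add_zero])
    simp only [map_add, LinearMap.add_apply, dotProduct_add, hker a u hu, hker a v hv,
      hT v u] at h
    linarith
  let ι : Fin n → Fin d := Fin.castLE (by omega)
  have hι : Function.Injective ι := Fin.castLE_injective _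
  let p : Fin d := ⟨n, by omega⟩
  let q : Fin d := ⟨n + 1, by omega⟩
  have hpι : ∀ a, ι a ≠ p := fun a h => by
    have := congrArg Fin.val h
    simp [ι, p] at this
    omega
  have hqι : ∀ a, ι a ≠ q := fun a h => by
    have := congrArg Fin.val h
    simp [ι, q] at this
    omega
  have hpq : p ≠ q := fun h => by
    have := congrArg Fin.val h
    simp [p, q] at this
  have hunit : IsUnit (Matrix.of fun i => l (ι i)) :=
    Matrix.linearIndependent_rows_iff_isUnit.mp (hl ι hι)
  have hsurj := Matrix.mulVec_surjective_iff_isUnit.mpr hunit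
  have hinj := Matrix.mulVec_injective_of_isUnit hunit
  choose e he using fun b : Fin n => hsurj (Pi.single b 1)
  have hle : ∀ a b, l (ι a) ⬝ᵥ e b = if a = b then 1 else 0 := by
    intro a b
    have := congrFun (he b) a
    rw [Pi.single_apply] at this
    exact this
  have hext : ∀ u v, (∀ a, l (ι a) ⬝ᵥ u = l (ι a) ⬝ᵥ v) → u = v :=
    fun u v h => hinj (funext h)
  have hexp : ∀ v, v = ∑ a, (l (ι a) ⬝ᵥ v) • e a := by
    intro v
    refine hext _ _ fun a => ?_
    simp [dotProduct_sum, hle]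
  -- coefficients of the extra covectors in the coframe do not vanish
  have hne : ∀ r, (∀ a, ι a ≠ r) → ∀ b, l r ⬝ᵥ e b ≠ 0 := by
    intro r hr b h0
    have : e b = 0 := by
      refine hzero (insert r ((Finset.univ.erase b).image ι)) ?_ _ ?_
      · rw [Finset.card_insert_of_notMem, Finset.card_image_of_injective _ hι,
          Finset.card_erase_of_mem (Finset.mem_univ _), Finset.card_univ, Fintype.card_fin]
        · omega
        · simp only [Finset.mem_image, not_exists, not_and]
          exact fun a _ => hr a
      · intro a ha
        rcases Finset.mem_insert.mp ha with rfl | ha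
        · exact h0
        · obtain ⟨c, hc, rfl⟩ := Finset.mem_image.mp ha
          rw [hle, if_neg (Finset.ne_of_mem_erase hc)]
    have h1 := hle b b
    simp [this] at h1
  have hdet : ∀ b c, b ≠ c →
      (l p ⬝ᵥ e c) * (l q ⬝ᵥ e b) - (l p ⬝ᵥ e b) * (l q ⬝ᵥ e c) ≠ 0 := by
    intro b c hbc h0
    set w := (l p ⬝ᵥ e c) • e b - (l p ⬝ᵥ e b) • e c with hw
    have : w = 0 := by
      refine hzero (insert p (insert q (((Finset.univ.erase b).erase c).image ι))) ?_ _ ?_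
      · rw [Finset.card_insert_of_notMem, Finset.card_insert_of_notMem,
          Finset.card_image_of_injective _ hι, Finset.card_erase_of_mem (by simp [hbc.symm]),
          Finset.card_erase_of_mem (Finset.mem_univ _), Finset.card_univ, Fintype.card_fin]
        · omega
        · simp only [Finset.mem_image, not_exists, not_and]
          exact fun a _ => hqι a
        · simp only [Finset.mem_insert, Finset.mem_image, not_or, not_exists, not_and]
          exact ⟨hpq, fun a _ => hpι a⟩
      · intro a ha
        simp only [hw, dotProduct_sub, dotProduct_smul, smul_eq_mul]
        rcases Finset.mem_insert.mp ha with rfl | ha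
        · ring
        rcases Finset.mem_insert.mp ha with rfl | ha
        · exact h0
        · obtain ⟨k, hk, rfl⟩ := Finset.mem_image.mp ha
          simp only [Finset.mem_erase] at hk
          simp [hle, hk.1, hk.2.1]
    have h1 : l (ι b) ⬝ᵥ w = 0 := by rw [this, dotProduct_zero]
    simp [hw, dotProduct_sub, hle, hbc] at h1
    exact hne p hpι c h1
  set t : Fin n → ℝ := fun b => l (ι b) ⬝ᵥ T (e b) (e b) with ht
  have hTdiag : ∀ b, T (e b) (e b) = t b • e b := by
    intro b
    refine hext _ _ fun a => ?_
    rw [dotProduct_smul, hle]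
    split_ifs with h
    · subst h; simp [ht]
    · simp [hpol (ι a) (e b) (e b) (by simp [hle, h]) (by simp [hle, h])]
  have hToff : ∀ b c, b ≠ c → T (e b) (e c) =
      (l (ι b) ⬝ᵥ T (e b) (e c)) • e b + (l (ι c) ⬝ᵥ T (e b) (e c)) • e c := by
    intro b c hbc
    refine hext _ _ fun a => ?_
    rw [dotProduct_add, dotProduct_smul, dotProduct_smul, hle, hle]
    by_cases hab : a = b
    · subst hab; simp [hbc]
    by_cases hac : a = c
    · subst hac; simp [hab]
    · simp [hab, hac, hpol (ι a) (e b) (e c) (by simp [hle, hab]) (by simp [hle, hac])]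
  have hrel : ∀ r, (∀ a, ι a ≠ r) → ∀ b c, b ≠ c →
      (l r ⬝ᵥ e b) * (t c - 2 * (l (ι b) ⬝ᵥ T (e b) (e c))) +
      (l r ⬝ᵥ e c) * (t b - 2 * (l (ι c) ⬝ᵥ T (e b) (e c))) = 0 := by
    intro r hr b c hbc
    have h := hker r ((l r ⬝ᵥ e c) • e b - (l r ⬝ᵥ e b) • e c) (by
      simp only [dotProduct_sub, dotProduct_smul, smul_eq_mul]; ring)
    simp only [map_sub, map_smul, LinearMap.sub_apply, LinearMap.smul_apply, hT (e c) (e b),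
      hTdiag] at h
    rw [hToff b c hbc] at h
    simp only [dotProduct_sub, dotProduct_add, dotProduct_smul, smul_eq_mul] at h
    have hb := hne r hr b
    have hc := hne r hr c
    apply mul_left_cancel₀ (mul_ne_zero hb hc)
    linear_combination h
  have hbasis : ∀ b c, T (e b) (e c) = (t b / 2) • e c + (t c / 2) • e b := by
    intro b c
    by_cases hbc : b = c
    · subst hbc
      rw [hTdiag, ← add_smul]
      congr 1
      ring
    · have h1 := hrel p hpι b c hbc
      have h2 := hrel q hqι b c hbc
      have hD := hdet b c hbc
      have hx : t c - 2 * (l (ι b) ⬝ᵥ T (e b) (e c)) = 0 := by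
        apply mul_left_cancel₀ hD
        linear_combination (l p ⬝ᵥ e c) * h2 - (l q ⬝ᵥ e c) * h1
      have hy : t b - 2 * (l (ι c) ⬝ᵥ T (e b) (e c)) = 0 := by
        apply mul_left_cancel₀ hD
        linear_combination (l q ⬝ᵥ e b) * h1 - (l p ⬝ᵥ e b) * h2
      rw [hToff b c hbc, add_comm]
      congr 2 <;> linarith
  have hlin : ∀ f g : (Fin n → ℝ) →ₗ[ℝ] (Fin n → ℝ), (∀ a, f (e a) = g (e a)) → f = g := by
    intro f g h
    refine LinearMap.ext fun v => ?_
    rw [hexp v]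
    simp only [map_sum, map_smul, h]
  set ρ : (Fin n → ℝ) →ₗ[ℝ] ℝ := ∑ a, (t a / 2) • dotProductBilin ℝ ℝ (l (ι a)) with hρ
  have hρe : ∀ b, ρ (e b) = t b / 2 := by
    intro b
    simp [hρ, LinearMap.sum_apply, hle]
  have hleft : ∀ b v, T (e b) v = ρ (e b) • v + ρ v • e b := by
    intro b
    have h := hlin (T (e b)) (ρ (e b) • LinearMap.id + ρ.smulRight (e b)) fun c => by
      simp [hbasis, hρe]
    intro v
    rw [h]
    simp
  refine ⟨ρ, fun u v => ?_⟩
  have h := hlin (T.flip v) (ρ.smulRight v + ρ v • LinearMap.id) fun c => by simp [hleft]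
  have := LinearMap.congr_fun h u
  simpa using this

lemma IsTorsionFreeConn.exists_geodesic {n : ℕ} {U : Set (Fin n → ℝ)} (hU : IsOpen U)
    {Γ : Fin n → Fin n → Fin n → (Fin n → ℝ) → ℝ} (hΓ : IsTorsionFreeConn U Γ)
    {x : Fin n → ℝ} (hx : x ∈ U) (v : Fin n → ℝ) :
    ∃ ε > 0, ∃ γ δ : ℝ → Fin n → ℝ, IsGeodesicOn U Γ (Set.Ioo (-ε) ε) γ ∧ γ 0 = x ∧ δ 0 = v ∧
      (∀ t ∈ Set.Ioo (-ε) ε, HasDerivAt γ (δ t) t) ∧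
      HasDerivAt δ (fun k => -∑ i, ∑ j, Γ k i j x * v i * v j) 0 := by
  let F : (Fin n → ℝ) × (Fin n → ℝ) → (Fin n → ℝ) × (Fin n → ℝ) :=
    fun p => (p.2, fun k => -∑ i, ∑ j, Γ k i j p.1 * p.2 i * p.2 j)
  have hFon : ContDiffOn ℝ 1 F (U ×ˢ Set.univ) := by
    refine contDiff_snd.contDiffOn.prodMk (contDiffOn_pi.2 fun k => ContDiffOn.neg ?_)
    refine ContDiffOn.sum fun i _ => ContDiffOn.sum fun j _ =>
      ContDiffOn.mul (ContDiffOn.mul ?_ ?_) ?_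
    · exact ((hΓ.1 k i j).of_le (by exact_mod_cast le_top)).comp contDiffOn_fst fun p hp => hp.1
    · exact ((contDiff_apply ℝ ℝ i).comp contDiff_snd).contDiffOn
    · exact ((contDiff_apply ℝ ℝ j).comp contDiff_snd).contDiffOn
  have hopen : IsOpen (U ×ˢ (Set.univ : Set (Fin n → ℝ))) := hU.prod isOpen_univ
  have hF : ContDiffAt ℝ 1 F (x, v) :=
    hFon.contDiffAt (hopen.mem_nhds ⟨hx, Set.mem_univ _⟩)
  obtain ⟨α, hα0, ε₁, hε₁, hα⟩ :=
    hF.exists_forall_mem_closedBall_exists_eq_forall_mem_Ioo_hasDerivAt₀ 0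
  have hcont0 : ContinuousAt α 0 := (hα 0 (by constructor <;> linarith)).continuousAt
  have hev : ∀ᶠ t in nhds (0 : ℝ), α t ∈ U ×ˢ (Set.univ : Set (Fin n → ℝ)) :=
    hcont0 (by rw [hα0]; exact hopen.mem_nhds ⟨hx, Set.mem_univ _⟩)
  obtain ⟨ε₂, hε₂, hball⟩ := Metric.eventually_nhds_iff.1 hev
  set ε := min ε₁ ε₂ with hε
  have hεpos : 0 < ε := lt_min hε₁ hε₂
  have hder : ∀ t ∈ Set.Ioo (-ε) ε, HasDerivAt α (F (α t)) t := fun t ht => hα t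
    ⟨by have := min_le_left ε₁ ε₂; linarith [ht.1], by have := min_le_left ε₁ ε₂; linarith [ht.2]⟩
  have hmem : ∀ t ∈ Set.Ioo (-ε) ε, (α t).1 ∈ U := fun t ht =>
    (hball (by
      rw [Real.dist_eq, sub_zero, abs_lt]
      have := min_le_right ε₁ ε₂
      exact ⟨by linarith [ht.1], by linarith [ht.2]⟩)).1
  have hγ : ∀ t ∈ Set.Ioo (-ε) ε, HasDerivAt (fun s => (α s).1) (α t).2 t := fun t ht =>
    (hder t ht).fst
  have hδ : ∀ t ∈ Set.Ioo (-ε) ε, HasDerivAt (fun s => (α s).2) (F (α t)).2 t := fun t ht =>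
    (hder t ht).snd
  have hαcont : ContinuousOn α (Set.Ioo (-ε) ε) := fun t ht =>
    (hder t ht).continuousAt.continuousWithinAt
  have hδC : ContDiffOn ℝ 1 (fun s => (α s).2) (Set.Ioo (-ε) ε) := by
    rw [show (1 : WithTop ℕ∞) = 0 + 1 from rfl, contDiffOn_succ_iff_deriv_of_isOpen isOpen_Ioo]
    refine ⟨fun t ht => (hδ t ht).differentiableAt.differentiableWithinAt, by simp, ?_⟩
    rw [contDiffOn_zero]
    refine ContinuousOn.congr (f := fun t => (F (α t)).2) ?_ fun t ht => (hδ t ht).deriv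
    exact continuous_snd.comp_continuousOn
      (hFon.continuousOn.comp hαcont fun t ht => ⟨hmem t ht, Set.mem_univ _⟩)
  refine ⟨ε, hεpos, fun s => (α s).1, fun s => (α s).2, ⟨hmem, ?_, ?_⟩, by simp [hα0],
    by simp [hα0], hγ, ?_⟩
  · rw [show (2 : WithTop ℕ∞) = 1 + 1 from by norm_num,
      contDiffOn_succ_iff_deriv_of_isOpen isOpen_Ioo]
    exact ⟨fun t ht => (hγ t ht).differentiableAt.differentiableWithinAt, by simp,
      hδC.congr fun t ht => (hγ t ht).deriv⟩
  · intro t ht k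
    have hd1 : ∀ s ∈ Set.Ioo (-ε) ε, ∀ i, deriv (fun u => (α u).1 i) s = (α s).2 i :=
      fun s hs i => (hasDerivAt_pi.1 (hγ s hs) i).deriv
    have hev : (fun s => deriv (fun u => (α u).1 k) s) =ᶠ[nhds t] fun s => (α s).2 k := by
      filter_upwards [isOpen_Ioo.mem_nhds ht] with s hs using hd1 s hs k
    rw [hev.deriv_eq, (hasDerivAt_pi.1 (hδ t ht) k).deriv]
    simp only [hd1 t ht, F]
    ring
  · have := hδ 0 ⟨by linarith, hεpos⟩
    simpa only [F, hα0] using this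

/-- The infinitesimal form of total geodesy: `(∇_v ω)(v) = 0` for `v` in the kernel of `ω`. -/
lemma TotallyGeodesic.fderiv_dotProduct_eq {n : ℕ} {U : Set (Fin n → ℝ)} (hU : IsOpen U)
    {Γ : Fin n → Fin n → Fin n → (Fin n → ℝ) → ℝ} (hΓ : IsTorsionFreeConn U Γ)
    {ω : (Fin n → ℝ) → Fin n → ℝ} (hω : ContDiffOn ℝ (⊤ : ℕ∞) ω U)
    (hg : TotallyGeodesic U Γ ω) {x : Fin n → ℝ} (hx : x ∈ U) {v : Fin n → ℝ}
    (hv : ω x ⬝ᵥ v = 0) :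
    fderiv ℝ ω x v ⬝ᵥ v = ω x ⬝ᵥ fun k => ∑ i, ∑ j, Γ k i j x * v i * v j := by
  obtain ⟨ε, hε, γ, δ, hgeo, hγ0, hδ0, hγ, hδ⟩ := hΓ.exists_geodesic hU hx v
  have h0 : (0 : ℝ) ∈ Set.Ioo (-ε) ε := ⟨by linarith, hε⟩
  have hd1 : ∀ s ∈ Set.Ioo (-ε) ε, ∀ i, deriv (fun u => γ u i) s = δ s i :=
    fun s hs i => (hasDerivAt_pi.1 (hγ s hs) i).deriv
  have hzero := hg _ isOpen_Ioo Set.ordConnected_Ioo h0 γ hgeo (by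
    simp only [hd1 0 h0, hγ0, hδ0]; exact hv)
  have hωd : HasFDerivAt ω (fderiv ℝ ω x) (γ 0) := by
    rw [hγ0]
    exact ((hω.contDiffAt (hU.mem_nhds hx)).differentiableAt (by simp)).hasFDerivAt
  have hcomp : HasDerivAt (fun t => ω (γ t)) (fderiv ℝ ω x v) 0 := by
    have := hωd.comp_hasDerivAt (0 : ℝ) (hγ 0 h0)
    rwa [hδ0] at this
  have hsum : HasDerivAt (fun t => ∑ k, ω (γ t) k * δ t k)
      (∑ k, (fderiv ℝ ω x v k * δ 0 k +
        ω (γ 0) k * -∑ i, ∑ j, Γ k i j x * v i * v j)) 0 :=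
    HasDerivAt.fun_sum fun k _ => (hasDerivAt_pi.1 hcomp k).mul (hasDerivAt_pi.1 hδ k)
  have hconst : (fun t => ∑ k, ω (γ t) k * δ t k) =ᶠ[nhds 0] fun _ => 0 := by
    filter_upwards [isOpen_Ioo.mem_nhds h0] with t ht
    have := hzero t ht
    simpa only [hd1 t ht] using this
  have := hsum.unique ((hasDerivAt_const (0 : ℝ) (0 : ℝ)).congr_of_eventuallyEq hconst)
  rw [hγ0, hδ0] at this
  simp only [Finset.sum_add_distrib, mul_neg, Finset.sum_neg_distrib] at this
  simp only [dotProduct]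
  linarith

/-- The vector-valued bilinear map with the given Christoffel symbols. -/
noncomputable def christoffelBilin {n : ℕ} (G : Fin n → Fin n → Fin n → ℝ) :
    (Fin n → ℝ) →ₗ[ℝ] (Fin n → ℝ) →ₗ[ℝ] (Fin n → ℝ) :=
  LinearMap.mk₂ ℝ (fun u v k => ∑ i, ∑ j, G k i j * u i * v j)
    (fun u u' v => by
      ext k
      simp only [Pi.add_apply, ← Finset.sum_add_distrib]
      exact Finset.sum_congr rfl fun i _ => Finset.sum_congr rfl fun j _ => by ring)
    (fun c u v => by
      ext k
      simp only [Pi.smul_apply, smul_eq_mul, Finset.mul_sum]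
      exact Finset.sum_congr rfl fun i _ => Finset.sum_congr rfl fun j _ => by ring)
    (fun u v v' => by
      ext k
      simp only [Pi.add_apply, ← Finset.sum_add_distrib]
      exact Finset.sum_congr rfl fun i _ => Finset.sum_congr rfl fun j _ => by ring)
    (fun c u v => by
      ext k
      simp only [Pi.smul_apply, smul_eq_mul, Finset.mul_sum]
      exact Finset.sum_congr rfl fun i _ => Finset.sum_congr rfl fun j _ => by ring)

lemma christoffelBilin_apply {n : ℕ} (G : Fin n → Fin n → Fin n → ℝ) (u v : Fin n → ℝ) :
    christoffelBilin G u v = fun k => ∑ i, ∑ j, G k i j * u i * v j := rfl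

lemma christoffelBilin_single {n : ℕ} (G : Fin n → Fin n → Fin n → ℝ) (i j k : Fin n) :
    christoffelBilin G (Pi.single i 1) (Pi.single j 1) k = G k i j := by
  simp [christoffelBilin_apply, Pi.single_apply]

lemma christoffelBilin_eq {n : ℕ} {G : Fin n → Fin n → Fin n → ℝ}
    {B : (Fin n → ℝ) →ₗ[ℝ] (Fin n → ℝ) →ₗ[ℝ] (Fin n → ℝ)}
    (h : ∀ i j k, B (Pi.single i 1) (Pi.single j 1) k = G k i j) : christoffelBilin G = B := by
  refine LinearMap.ext_basis (Pi.basisFun ℝ (Fin n)) (Pi.basisFun ℝ (Fin n)) fun i j => ?_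
  ext k
  simp only [Pi.basisFun_apply, christoffelBilin_single, h]

lemma christoffelBilin_symm {n : ℕ} {G : Fin n → Fin n → Fin n → ℝ}
    (hG : ∀ k i j, G k i j = G k j i) (u v : Fin n → ℝ) :
    christoffelBilin G u v = christoffelBilin G v u := by
  have h : christoffelBilin G = (christoffelBilin G).flip :=
    christoffelBilin_eq fun i j k => by
      rw [LinearMap.flip_apply, christoffelBilin_single, hG]
  exact LinearMap.congr_fun₂ h u v

lemma pd_apply_eq_fderiv {n : ℕ} {f : (Fin n → ℝ) → Fin n → ℝ} {x : Fin n → ℝ}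
    (hf : DifferentiableAt ℝ f x) (i k : Fin n) :
    pd i (fun y => f y k) x = fderiv ℝ f x (Pi.single i 1) k := by
  rw [pd, (hasFDerivAt_pi'.1 hf.hasFDerivAt k).fderiv]
  rfl

lemma fderiv_apply_eq_sum_pd {n : ℕ} {f : (Fin n → ℝ) → Fin n → ℝ} {x : Fin n → ℝ}
    (hf : DifferentiableAt ℝ f x) (v : Fin n → ℝ) (k : Fin n) :
    fderiv ℝ f x v k = ∑ i, pd i (fun y => f y k) x * v i := by
  conv_lhs => rw [pi_eq_sum_univ' v]
  simp only [map_sum, map_smul, Finset.sum_apply, Pi.smul_apply, smul_eq_mul,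
    pd_apply_eq_fderiv hf]
  refine Finset.sum_congr rfl fun i _ => ?_
  rw [mul_comm]

lemma pd_contDiffOn {n : ℕ} {U : Set (Fin n → ℝ)} (hU : IsOpen U) {f : (Fin n → ℝ) → ℝ}
    (hf : ContDiffOn ℝ (⊤ : ℕ∞) f U) (i : Fin n) : ContDiffOn ℝ (⊤ : ℕ∞) (pd i f) U :=
  (hf.fderiv_of_isOpen hU (by simp)).clm_apply contDiffOn_const

lemma pd_pd_apply_eq_fderiv {n : ℕ} {U : Set (Fin n → ℝ)} (hU : IsOpen U)
    {f : (Fin n → ℝ) → Fin n → ℝ} (hf : ContDiffOn ℝ (⊤ : ℕ∞) f U) {x : Fin n → ℝ} (hx : x ∈ U)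
    (i j k : Fin n) :
    pd i (fun y => pd j (fun z => f z k) y) x =
      fderiv ℝ (fderiv ℝ f) x (Pi.single i 1) (Pi.single j 1) k := by
  have hd : ∀ y ∈ U, DifferentiableAt ℝ f y := fun y hy =>
    (hf.contDiffAt (hU.mem_nhds hy)).differentiableAt (by simp)
  have hd2 : DifferentiableAt ℝ (fderiv ℝ f) x :=
    ((hf.fderiv_of_isOpen hU (m := (⊤ : ℕ∞)) (by simp)).contDiffAt
      (hU.mem_nhds hx)).differentiableAt (by simp)
  have hev : (fun y => pd j (fun z => f z k) y) =ᶠ[nhds x]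
      fun y => fderiv ℝ f y (Pi.single j 1) k := by
    filter_upwards [hU.mem_nhds hx] with y hy using pd_apply_eq_fderiv (hd y hy) j k
  rw [pd, hev.fderiv_eq]
  have h1 : HasFDerivAt (fun y => fderiv ℝ f y (Pi.single j 1))
      ((fderiv ℝ (fderiv ℝ f) x).flip (Pi.single j 1)) x := by
    simpa using hd2.hasFDerivAt.clm_apply (hasFDerivAt_const (Pi.single j 1) x)
  rw [(hasFDerivAt_pi'.1 h1 k).fderiv]
  rfl

lemma christoffelBilin_pullbackConn {n : ℕ} {U U' : Set (Fin n → ℝ)} (hU : IsOpen U)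
    (hU' : IsOpen U') {φ ψ : (Fin n → ℝ) → Fin n → ℝ} (hφ : ContDiffOn ℝ (⊤ : ℕ∞) φ U)
    (hψ : ContDiffOn ℝ (⊤ : ℕ∞) ψ U') (hmaps : Set.MapsTo φ U U')
    (Γ' : Fin n → Fin n → Fin n → (Fin n → ℝ) → ℝ) {x : Fin n → ℝ} (hx : x ∈ U)
    (u v : Fin n → ℝ) :
    christoffelBilin (fun k i j => pullbackConn φ ψ Γ' k i j x) u v =
      fderiv ℝ ψ (φ x)
        (christoffelBilin (fun c p q => Γ' c p q (φ x)) (fderiv ℝ φ x u) (fderiv ℝ φ x v) +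
          fderiv ℝ (fderiv ℝ φ) x u v) := by
  have hφd : DifferentiableAt ℝ φ x :=
    (hφ.contDiffAt (hU.mem_nhds hx)).differentiableAt (by simp)
  have hψd : DifferentiableAt ℝ ψ (φ x) :=
    (hψ.contDiffAt (hU'.mem_nhds (hmaps hx))).differentiableAt (by simp)
  let B : (Fin n → ℝ) →ₗ[ℝ] (Fin n → ℝ) →ₗ[ℝ] (Fin n → ℝ) :=
    ((christoffelBilin (fun c p q => Γ' c p q (φ x))).compl₁₂
        (fderiv ℝ φ x : (Fin n → ℝ) →ₗ[ℝ] (Fin n → ℝ))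
        (fderiv ℝ φ x : (Fin n → ℝ) →ₗ[ℝ] (Fin n → ℝ)) +
      (fderiv ℝ (fderiv ℝ φ) x).toLinearMap₁₂).compr₂
        (fderiv ℝ ψ (φ x) : (Fin n → ℝ) →ₗ[ℝ] (Fin n → ℝ))
  have hB : ∀ u v, B u v = fderiv ℝ ψ (φ x)
        (christoffelBilin (fun c p q => Γ' c p q (φ x)) (fderiv ℝ φ x u) (fderiv ℝ φ x v) +
          fderiv ℝ (fderiv ℝ φ) x u v) := fun u v => rfl
  rw [← hB]
  refine LinearMap.congr_fun₂ (christoffelBilin_eq fun i j k => ?_) u v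
  rw [hB, fderiv_apply_eq_sum_pd hψd, pullbackConn]
  simp only [pd_pd_apply_eq_fderiv hU hφ hx, christoffelBilin_apply, Pi.add_apply, mul_add,
    Finset.sum_add_distrib, pd_apply_eq_fderiv hφd, Finset.mul_sum]
  congr 1
  · rw [Finset.sum_comm]
    refine Finset.sum_congr rfl fun p _ => ?_
    rw [Finset.sum_comm]
    exact Finset.sum_congr rfl fun q _ => Finset.sum_congr rfl fun c _ => by ring
  · exact Finset.sum_congr rfl fun c _ => mul_comm _ _

lemma pullbackConn_symm {n : ℕ} {U U' : Set (Fin n → ℝ)} (hU : IsOpen U)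
    {φ : (Fin n → ℝ) → Fin n → ℝ} (ψ : (Fin n → ℝ) → Fin n → ℝ)
    (hφ : ContDiffOn ℝ (⊤ : ℕ∞) φ U) {Γ' : Fin n → Fin n → Fin n → (Fin n → ℝ) → ℝ}
    (hΓ' : IsTorsionFreeConn U' Γ') {x : Fin n → ℝ} (hx : x ∈ U) (k i j : Fin n) :
    pullbackConn φ ψ Γ' k i j x = pullbackConn φ ψ Γ' k j i x := by
  have hsymm : IsSymmSndFDerivAt ℝ φ x :=
    (hφ.contDiffAt (hU.mem_nhds hx)).isSymmSndFDerivAt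
      (by rw [minSmoothness_of_isRCLikeNormedField]; exact WithTop.coe_le_coe.2 le_top)
  simp only [pullbackConn, pd_pd_apply_eq_fderiv hU hφ hx, hsymm.eq (Pi.single i 1)]
  congr 1
  rw [Finset.sum_comm]
  refine Finset.sum_congr rfl fun p _ => Finset.sum_congr rfl fun q _ =>
    Finset.sum_congr rfl fun c _ => ?_
  rw [hΓ'.2 c p q]
  ring

lemma pullbackConn_contDiffOn {n : ℕ} {U U' : Set (Fin n → ℝ)} (hU : IsOpen U)
    (hU' : IsOpen U') {φ ψ : (Fin n → ℝ) → Fin n → ℝ} (hφ : ContDiffOn ℝ (⊤ : ℕ∞) φ U)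
    (hψ : ContDiffOn ℝ (⊤ : ℕ∞) ψ U') (hmaps : Set.MapsTo φ U U')
    {Γ' : Fin n → Fin n → Fin n → (Fin n → ℝ) → ℝ} (hΓ' : IsTorsionFreeConn U' Γ')
    (k i j : Fin n) : ContDiffOn ℝ (⊤ : ℕ∞) (pullbackConn φ ψ Γ' k i j) U := by
  have hφc : ∀ c, ContDiffOn ℝ (⊤ : ℕ∞) (fun y => φ y c) U := contDiffOn_pi.1 hφ
  have hψc : ∀ c, ContDiffOn ℝ (⊤ : ℕ∞) (fun x => pd c (fun y => ψ y k) (φ x)) U := fun c =>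
    (pd_contDiffOn hU' (contDiffOn_pi.1 hψ k) c).comp hφ hmaps
  refine ContDiffOn.add ?_ ?_
  · refine ContDiffOn.sum fun p _ => ContDiffOn.sum fun q _ => ContDiffOn.sum fun c _ => ?_
    exact (((pd_contDiffOn hU (hφc p) i).mul (pd_contDiffOn hU (hφc q) j)).mul
      ((hΓ'.1 c p q).comp hφ hmaps)).mul (hψc c)
  · exact ContDiffOn.sum fun c _ =>
      (pd_contDiffOn hU (pd_contDiffOn hU (hφc c) j) i).mul (hψc c)

/-- A foliation whose image is totally geodesic for `Γ'` is infinitesimally totally geodesic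
for the pullback of `Γ'`. -/
lemma fderiv_dotProduct_eq_pullbackConn {n : ℕ} {U U' : Set (Fin n → ℝ)} (hU : IsOpen U)
    (hU' : IsOpen U') {φ ψ : (Fin n → ℝ) → Fin n → ℝ} (hφ : ContDiffOn ℝ (⊤ : ℕ∞) φ U)
    (hψ : ContDiffOn ℝ (⊤ : ℕ∞) ψ U') (hmaps : Set.MapsTo φ U U')
    (hinv : ∀ x ∈ U, ψ (φ x) = x) (hinv' : ∀ y ∈ U', φ (ψ y) = y)
    {Γ' : Fin n → Fin n → Fin n → (Fin n → ℝ) → ℝ} (hΓ' : IsTorsionFreeConn U' Γ')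
    {ω ω' : (Fin n → ℝ) → Fin n → ℝ} (hω : ContDiffOn ℝ (⊤ : ℕ∞) ω U)
    (hω' : ContDiffOn ℝ (⊤ : ℕ∞) ω' U') (hg' : TotallyGeodesic U' Γ' ω')
    {s : (Fin n → ℝ) → ℝ} (hs : ContDiffOn ℝ (⊤ : ℕ∞) s U) (hs0 : ∀ x ∈ U, s x ≠ 0)
    (hpull : ∀ x ∈ U, ∀ m, (∑ c, ω' (φ x) c * pd m (fun y => φ y c) x) = s x * ω x m)
    {x : Fin n → ℝ} (hx : x ∈ U) {v : Fin n → ℝ} (hv : ω x ⬝ᵥ v = 0) :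
    fderiv ℝ ω x v ⬝ᵥ v =
      ω x ⬝ᵥ christoffelBilin (fun k i j => pullbackConn φ ψ Γ' k i j x) v v := by
  have hdiff : ∀ y ∈ U, DifferentiableAt ℝ φ y := fun y hy =>
    (hφ.contDiffAt (hU.mem_nhds hy)).differentiableAt (by simp)
  have hψd : DifferentiableAt ℝ ψ (φ x) :=
    (hψ.contDiffAt (hU'.mem_nhds (hmaps hx))).differentiableAt (by simp)
  have hpull' : ∀ y ∈ U, ∀ w, ω' (φ y) ⬝ᵥ fderiv ℝ φ y w = s y * (ω y ⬝ᵥ w) := by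
    intro y hy w
    simp only [dotProduct, fderiv_apply_eq_sum_pd (hdiff y hy), Finset.mul_sum]
    rw [Finset.sum_comm]
    refine Finset.sum_congr rfl fun m _ => ?_
    rw [← mul_assoc, ← hpull y hy m, Finset.sum_mul]
    exact Finset.sum_congr rfl fun c _ => by ring
  have hright : ∀ z, fderiv ℝ φ x (fderiv ℝ ψ (φ x) z) = z := by
    have hcomp : HasFDerivAt (φ ∘ ψ) ((fderiv ℝ φ x).comp (fderiv ℝ ψ (φ x))) (φ x) := by
      refine HasFDerivAt.comp _ ?_ hψd.hasFDerivAt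
      rw [hinv x hx]
      exact (hdiff x hx).hasFDerivAt
    have hev : (φ ∘ ψ) =ᶠ[nhds (φ x)] id := by
      filter_upwards [hU'.mem_nhds (hmaps hx)] with y hy using hinv' y hy
    have h := hcomp.unique ((hasFDerivAt_id (φ x)).congr_of_eventuallyEq hev)
    exact fun z => congrArg (fun L => L z) h
  set w := fderiv ℝ φ x v with hw
  have hgeo := hg'.fderiv_dotProduct_eq hU' hΓ' hω' (hmaps hx) (v := w)
    (by rw [hw, hpull' x hx, hv, mul_zero])
  rw [← christoffelBilin_apply (fun c p q => Γ' c p q (φ x))] at hgeo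
  -- differentiate the pullback relation along `v`
  have hline : HasDerivAt (fun t : ℝ => x + t • v) v 0 := by
    simpa using ((hasDerivAt_id (0 : ℝ)).smul_const v).const_add x
  have hx0 : x = x + (0 : ℝ) • v := by simp
  have hcurve : ∀ {F : Type} [NormedAddCommGroup F] [NormedSpace ℝ F]
      {f : (Fin n → ℝ) → F}, DifferentiableAt ℝ f x →
      HasDerivAt (fun t : ℝ => f (x + t • v)) (fderiv ℝ f x v) 0 := by
    intro F _ _ f hf
    have : HasFDerivAt f (fderiv ℝ f x) (x + (0 : ℝ) • v) := by rw [← hx0]; exact hf.hasFDerivAt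
    exact this.comp_hasDerivAt (0 : ℝ) hline
  have hωd := hcurve ((hω.contDiffAt (hU.mem_nhds hx)).differentiableAt (by simp))
  have hsd := hcurve ((hs.contDiffAt (hU.mem_nhds hx)).differentiableAt (by simp))
  have hDφ := hcurve (((hφ.fderiv_of_isOpen hU (m := (⊤ : ℕ∞)) (by simp)).contDiffAt
      (hU.mem_nhds hx)).differentiableAt (by simp))
  have hDφv : HasDerivAt (fun t : ℝ => fderiv ℝ φ (x + t • v) v)
      (fderiv ℝ (fderiv ℝ φ) x v v) 0 := by
    simpa using hDφ.clm_apply (hasDerivAt_const (0 : ℝ) v)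
  have hω'd : HasDerivAt (fun t : ℝ => ω' (φ (x + t • v))) (fderiv ℝ ω' (φ x) w) 0 := by
    have h : HasFDerivAt ω' (fderiv ℝ ω' (φ x)) (φ (x + (0 : ℝ) • v)) := by
      rw [← hx0]
      exact ((hω'.contDiffAt (hU'.mem_nhds (hmaps hx))).differentiableAt (by simp)).hasFDerivAt
    exact h.comp_hasDerivAt (0 : ℝ) (hcurve (hdiff x hx))
  have hdot : ∀ {a b : ℝ → Fin n → ℝ} {a' b' : Fin n → ℝ}, HasDerivAt a a' 0 →
      HasDerivAt b b' 0 → HasDerivAt (fun t => a t ⬝ᵥ b t) (a' ⬝ᵥ b 0 + a 0 ⬝ᵥ b') 0 := by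
    intro a b a' b' ha hb
    simp only [dotProduct, ← Finset.sum_add_distrib]
    exact HasDerivAt.fun_sum fun k _ => (hasDerivAt_pi.1 ha k).mul (hasDerivAt_pi.1 hb k)
  have hL := hdot hω'd hDφv
  have hR := hsd.mul (hdot hωd (hasDerivAt_const (0 : ℝ) v))
  have hev : (fun t : ℝ => ω' (φ (x + t • v)) ⬝ᵥ fderiv ℝ φ (x + t • v) v) =ᶠ[nhds 0]
      (fun t : ℝ => s (x + t • v)) * fun t : ℝ => ω (x + t • v) ⬝ᵥ v := by
    have hmem : ∀ᶠ t : ℝ in nhds 0, x + t • v ∈ U :=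
      hline.continuousAt (by rw [← hx0]; exact hU.mem_nhds hx)
    filter_upwards [hmem] with t ht using hpull' _ ht v
  have heq := hL.unique (hR.congr_of_eventuallyEq hev)
  simp only [← hx0, hv, mul_zero, zero_add, dotProduct_zero, add_zero] at heq
  apply mul_left_cancel₀ (hs0 x hx)
  rw [← heq, hgeo, ← hpull' x hx, christoffelBilin_pullbackConn hU hU' hφ hψ hmaps Γ' hx,
    hright, dotProduct_add]

/-- Gronwall-type theorem: a diffeomorphism mapping one geodesic `d`-web of
hypersurfaces (`d ≥ n+2`) onto another is projective with respect to the canonical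
projective structures: the pullback connection `φ*Γ'` is projectively equivalent to `Γ`. -/
theorem statement13 {n d : ℕ} (hn : 2 ≤ n) (hd : n + 2 ≤ d)
    (U U' : Set (Fin n → ℝ)) (hU : IsOpen U) (hU' : IsOpen U')
    (hUconn : IsConnected U) (hU'conn : IsConnected U')
    (ωs : Fin d → (Fin n → ℝ) → Fin n → ℝ) (hweb : IsWeb U ωs)
    (ωs' : Fin d → (Fin n → ℝ) → Fin n → ℝ) (hweb' : IsWeb U' ωs')
    (Γ Γ' : Fin n → Fin n → Fin n → (Fin n → ℝ) → ℝ)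
    (hΓ : IsTorsionFreeConn U Γ) (hΓ' : IsTorsionFreeConn U' Γ')
    (hg : ∀ i, TotallyGeodesic U Γ (ωs i)) (hg' : ∀ i, TotallyGeodesic U' Γ' (ωs' i))
    (φ ψ : (Fin n → ℝ) → Fin n → ℝ)
    (hφ : ContDiffOn ℝ (⊤ : ℕ∞) φ U) (hψ : ContDiffOn ℝ (⊤ : ℕ∞) ψ U')
    (hmaps : Set.MapsTo φ U U') (hmaps' : Set.MapsTo ψ U' U)
    (hinv : ∀ x ∈ U, ψ (φ x) = x) (hinv' : ∀ y ∈ U', φ (ψ y) = y)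
    (hwebmap : ∀ i, ∃ s : (Fin n → ℝ) → ℝ, ContDiffOn ℝ (⊤ : ℕ∞) s U ∧
      (∀ x ∈ U, s x ≠ 0) ∧
      ∀ x ∈ U, ∀ m, (∑ c, ωs' i (φ x) c * pd m (fun y => φ y c) x) = s x * ωs i x m) :
    ProjEquiv U Γ (pullbackConn φ ψ Γ') := by
  have hkey : ∀ x ∈ U, ∃ ρ : Fin n → ℝ, ∀ k i j, pullbackConn φ ψ Γ' k i j x - Γ k i j x =
      (if k = i then ρ j else 0) + (if k = j then ρ i else 0) := by
    intro x hx
    let T := christoffelBilin (fun k i j => pullbackConn φ ψ Γ' k i j x) -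
      christoffelBilin (fun k i j => Γ k i j x)
    have hTapp : ∀ u v, T u v = christoffelBilin (fun k i j => pullbackConn φ ψ Γ' k i j x) u v -
      christoffelBilin (fun k i j => Γ k i j x) u v := fun u v => rfl
    obtain ⟨ρ, hρ⟩ := exists_covector_of_preserves_ker hd (hweb.2 x hx) T
      (fun u v => by
        rw [hTapp, hTapp, christoffelBilin_symm (pullbackConn_symm hU ψ hφ hΓ' hx),
          christoffelBilin_symm fun k i j => hΓ.2 k i j x])
      (fun a v hv => by
        obtain ⟨s, hs, hs0, hpull⟩ := hwebmap a
        rw [hTapp, dotProduct_sub, sub_eq_zero,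
          ← fderiv_dotProduct_eq_pullbackConn hU hU' hφ hψ hmaps hinv hinv' hΓ'
            (hweb.1 a).1 (hweb'.1 a).1 (hg' a) hs hs0 hpull hx hv,
          (hg a).fderiv_dotProduct_eq hU hΓ (hweb.1 a).1 hx hv]
        rfl)
    refine ⟨fun i => ρ (Pi.single i 1), fun k i j => ?_⟩
    have h := congrFun (hρ (Pi.single i 1) (Pi.single j 1)) k
    rw [hTapp, Pi.sub_apply, christoffelBilin_single, christoffelBilin_single] at h
    rw [h, add_comm]
    simp [Pi.single_apply]
  have hn1 : (n : ℝ) + 1 ≠ 0 := by positivity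
  refine ⟨fun x j => (∑ k, (pullbackConn φ ψ Γ' k k j x - Γ k k j x)) / (n + 1), ?_, ?_⟩
  · exact contDiffOn_pi.2 fun j => (ContDiffOn.sum fun k _ =>
      (pullbackConn_contDiffOn hU hU' hφ hψ hmaps hΓ' k k j).sub (hΓ.1 k k j)).div_const _
  · intro x hx k i j
    obtain ⟨ρ, hρ⟩ := hkey x hx
    have htrace : ∀ j, (∑ k, (pullbackConn φ ψ Γ' k k j x - Γ k k j x)) / (n + 1) = ρ j := by
      intro j
      rw [div_eq_iff hn1]
      simp only [hρ, if_true, Finset.sum_add_distrib, Finset.sum_const, Finset.card_univ,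
        Fintype.card_fin, nsmul_eq_mul, Finset.sum_ite_eq', Finset.mem_univ]
      ring
    simp only [htrace]
    linarith [hρ k i j]
end
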